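/- Fefferman–Stein theorem in homogeneous Morrey spaces: Let d ≥ 1, p ∈ (1,∞) and 0 < β ≤ d/p. There is a constant N = N(d,p,β) such that for every locally integrable f on ℝ^d with ‖f‖_{Ė_{p,β}} < ∞: ‖f‖_{Ė_{p,β}} ≤ N ‖f^{♯}‖_{Ė_{p,β}}. -/

import Mathlib

/-!
The inequality is a good-`λ` argument with stopping-time balls, in which no maximal function is
needed.

Fix a ball `B(c,r)` and a level `λ` above all averages `|f_{B(x,r)}|`. Almost every
`x ∈ B(c,r)` with `|f x| > 2λ` has a largest scale `ρ = 8^{-k} r` with `|f_{B(x,ρ)}| > λ` and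
`|f_{B(x,8ρ)}| ≤ λ` (`exists_radius`). On such a ball `B`, either `f^♯ > γλ` everywhere, or the
mean oscillations over `B` and `8B` are at most `γλ`; in the latter case Chebyshev's inequality
shows both that `{|f| > λ/2}` fills at least half of `B` and that `{|f| > 2λ}` takes up only a
small part of `8B` (`single_ball`). Summing over a Vitali subfamily gives `good_lambda`:

`|{|f| > 2λ} ∩ B(c,r)| ≤ 8^d (2γ |{|f| > λ/2} ∩ B(c,2r)| + |{f^♯ > γλ} ∩ B(c,2r)|)`.

Integrating over `λ` bounds `∫_{B(c,r)} |f|^p` by a multiple of `γ` times the integral of `|f|^p`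
over the double ball, the integral of `(f^♯)^p` over it, and a contribution of the low levels
(`local_estimate`). The latter is controlled by the averages of `f` over balls of radius `r`, which
are `≤ C ‖f^♯‖ r^{-β}` by telescoping over dyadic dilates: `β > 0` makes the series converge, and
finiteness of `‖f‖` makes the averages over large balls tend to zero (`avg_le_sharp`). With `γ`
small, the term containing `f` is at most half of `‖f‖^p` after normalization, and is absorbed
because `‖f‖` is finite (`absorb`).
-/

open MeasureTheory ENNReal Metric

noncomputable section

/-- The sharp function `f^{♯}(x) = sup { ⨍_B |f − f_B| dy : B an open ball containing x }`. -/
def sharpFn (d : ℕ) (g : EuclideanSpace ℝ (Fin d) → ℝ)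
    (x : EuclideanSpace ℝ (Fin d)) : ℝ≥0∞ :=
  ⨆ (c : EuclideanSpace ℝ (Fin d)) (r : ℝ) (_ : 0 < r) (_ : x ∈ ball c r),
    (volume (ball c r))⁻¹ *
      ∫⁻ y in ball c r, ENNReal.ofReal |g y - ⨍ z in ball c r, g z| ∂volume

/-- The homogeneous Morrey norm
`‖g‖_{Ė_{p,β}} = sup { r^β (⨍_B g^p dx)^{1/p} : r > 0, B an open ball of radius r }`
of an `ℝ≥0∞`-valued function. -/
def morreyNormE (d : ℕ) (g : EuclideanSpace ℝ (Fin d) → ℝ≥0∞) (p β : ℝ) : ℝ≥0∞ :=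
  ⨆ (c : EuclideanSpace ℝ (Fin d)) (r : ℝ) (_ : 0 < r),
    ENNReal.ofReal (r ^ β) *
      ((volume (ball c r))⁻¹ * ∫⁻ y in ball c r, g y ^ p ∂volume) ^ (1 / p)


namespace MorreyFS

open Filter Topology

variable {d : ℕ}

/-! ### Mean oscillation and Morrey averages -/

/-- The mean oscillation `⨍_B |f − f_B|` over the ball `B` with centre `c` and radius `r`. -/
def osc (f : EuclideanSpace ℝ (Fin d) → ℝ) (c : EuclideanSpace ℝ (Fin d)) (r : ℝ) : ℝ≥0∞ :=
  (volume (ball c r))⁻¹ *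
    ∫⁻ y in ball c r, ENNReal.ofReal |f y - ⨍ z in ball c r, f z| ∂volume

lemma osc_le_sharpFn (f : EuclideanSpace ℝ (Fin d) → ℝ) {c x : EuclideanSpace ℝ (Fin d)} {r : ℝ}
    (hr : 0 < r) (hx : x ∈ ball c r) : osc f c r ≤ sharpFn d f x :=
  le_iSup_of_le c <| le_iSup_of_le r <| le_iSup_of_le hr <| le_iSup_of_le hx le_rfl

lemma isOpen_lt_sharpFn (f : EuclideanSpace ℝ (Fin d) → ℝ) (a : ℝ≥0∞) :
    IsOpen {x | a < sharpFn d f x} := by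
  rw [isOpen_iff_mem_nhds]
  intro x hx
  simp only [Set.mem_ofPred_eq, sharpFn, lt_iSup_iff] at hx
  obtain ⟨c, r, hr, hxB, h⟩ := hx
  filter_upwards [isOpen_ball.mem_nhds hxB] with y hy
  exact h.trans_le (osc_le_sharpFn f hr hy)

lemma measurable_sharpFn (f : EuclideanSpace ℝ (Fin d) → ℝ) : Measurable (sharpFn d f) :=
  measurable_of_Ioi fun a => (isOpen_lt_sharpFn f a).measurableSet

lemma vol_pos (c : EuclideanSpace ℝ (Fin d)) {r : ℝ} (hr : 0 < r) : volume (ball c r) ≠ 0 :=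
  (measure_ball_pos volume c hr).ne'

lemma vol_fin (c : EuclideanSpace ℝ (Fin d)) (r : ℝ) : volume (ball c r) ≠ ⊤ :=
  measure_ball_lt_top.ne

lemma vol_scale (c c' : EuclideanSpace ℝ (Fin d)) {r a : ℝ} (ha : 0 < a) :
    volume (ball c (a * r)) = ENNReal.ofReal a ^ d * volume (ball c' r) := by
  rw [Measure.addHaar_ball_mul_of_pos volume c ha, ← ENNReal.ofReal_pow ha.le,
    finrank_euclideanSpace_fin, Measure.addHaar_ball_center volume c' r]

lemma integrableOn_ball {f : EuclideanSpace ℝ (Fin d) → ℝ} (hf : LocallyIntegrable f volume)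
    (c : EuclideanSpace ℝ (Fin d)) (r : ℝ) : IntegrableOn f (ball c r) volume :=
  (hf.integrableOn_isCompact (isCompact_closedBall c r)).mono_set ball_subset_closedBall

/-- The average over a ball is at least as close to `a` as the function is on average. -/
lemma avg_sub_le {f : EuclideanSpace ℝ (Fin d) → ℝ} (hf : LocallyIntegrable f volume)
    (c : EuclideanSpace ℝ (Fin d)) {r : ℝ} (hr : 0 < r) (a : ℝ) :
    ENNReal.ofReal |(⨍ z in ball c r, f z) - a| ≤
      (volume (ball c r))⁻¹ * ∫⁻ y in ball c r, ENNReal.ofReal |f y - a| := by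
  have hi := integrableOn_ball hf c r
  have hV : (volume (ball c r)).toReal ≠ 0 :=
    ENNReal.toReal_ne_zero.2 ⟨vol_pos c hr, vol_fin c r⟩
  have h1 : (⨍ z in ball c r, f z) - a = (volume.real (ball c r))⁻¹ * ∫ y in ball c r, (f y - a) := by
    rw [integral_sub hi (integrableOn_const (vol_fin c r)), setAverage_eq, setIntegral_const]
    simp only [smul_eq_mul, Measure.real]
    field_simp
  have h2 := enorm_integral_le_lintegral_enorm (μ := volume.restrict (ball c r)) (fun y => f y - a)
  rw [h1, abs_mul, ENNReal.ofReal_mul (abs_nonneg _), abs_of_nonneg (by positivity), Measure.real,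
    ENNReal.ofReal_inv_of_pos (lt_of_le_of_ne (by positivity) (Ne.symm hV)),
    ENNReal.ofReal_toReal (vol_fin c r)]
  gcongr
  simpa [Real.enorm_eq_ofReal_abs] using h2

lemma lintegral_eq_osc (f : EuclideanSpace ℝ (Fin d) → ℝ)
    (c : EuclideanSpace ℝ (Fin d)) {r : ℝ} (hr : 0 < r) :
    ∫⁻ y in ball c r, ENNReal.ofReal |f y - ⨍ z in ball c r, f z| =
      volume (ball c r) * osc f c r := by
  rw [osc, ← mul_assoc, ENNReal.mul_inv_cancel (vol_pos c hr) (vol_fin c r), one_mul]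

/-- Chebyshev's inequality for the mean oscillation. -/
lemma cheb {f : EuclideanSpace ℝ (Fin d) → ℝ} (hf : LocallyIntegrable f volume)
    (c : EuclideanSpace ℝ (Fin d)) {r : ℝ} (hr : 0 < r) {t : ℝ}
    {s : Set (EuclideanSpace ℝ (Fin d))} (hs : s ⊆ ball c r)
    (hst : ∀ y ∈ s, t ≤ |f y - ⨍ z in ball c r, f z|) :
    ENNReal.ofReal t * volume s ≤ volume (ball c r) * osc f c r := by
  rw [← lintegral_eq_osc f c hr]
  have hm : AEMeasurable (fun y => ENNReal.ofReal |f y - ⨍ z in ball c r, f z|)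
      (volume.restrict (ball c r)) := by
    have := (integrableOn_ball hf c r).aestronglyMeasurable.aemeasurable
    exact ((this.sub_const _).norm).ennreal_ofReal
  refine le_trans ?_ (mul_meas_ge_le_lintegral₀ hm (ENNReal.ofReal t))
  refine mul_le_mul_right ?_ _
  rw [Measure.restrict_apply' measurableSet_ball]
  exact measure_mono fun y hy => ⟨ENNReal.ofReal_le_ofReal (hst y hy), hs hy⟩

lemma rpow_cancel {r : ℝ} (hr : 0 < r) (β : ℝ) :
    ENNReal.ofReal (r ^ β) * ENNReal.ofReal (r ^ (-β)) = 1 := by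
  rw [← ENNReal.ofReal_mul (by positivity), ← Real.rpow_add hr]; simp

/-- The Morrey norm controls the `L^p` average on each ball. -/
lemma morrey_avg_le {g : EuclideanSpace ℝ (Fin d) → ℝ≥0∞} {p β : ℝ}
    (c : EuclideanSpace ℝ (Fin d)) {r : ℝ} (hr : 0 < r) :
    ((volume (ball c r))⁻¹ * ∫⁻ y in ball c r, g y ^ p ∂volume) ^ (1 / p) ≤
      morreyNormE d g p β * ENNReal.ofReal (r ^ (-β)) := by
  have h : ENNReal.ofReal (r ^ β) *
      ((volume (ball c r))⁻¹ * ∫⁻ y in ball c r, g y ^ p ∂volume) ^ (1 / p) ≤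
      morreyNormE d g p β :=
    le_iSup_of_le c <| le_iSup_of_le r <| le_iSup_of_le hr le_rfl
  calc _ = (ENNReal.ofReal (r ^ β) * ENNReal.ofReal (r ^ (-β))) *
        ((volume (ball c r))⁻¹ * ∫⁻ y in ball c r, g y ^ p ∂volume) ^ (1 / p) := by
        rw [rpow_cancel hr, one_mul]
    _ = (ENNReal.ofReal (r ^ β) *
      ((volume (ball c r))⁻¹ * ∫⁻ y in ball c r, g y ^ p ∂volume) ^ (1 / p)) *
        ENNReal.ofReal (r ^ (-β)) := by ring
    _ ≤ _ := by gcongr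

lemma morrey_lintegral_le {g : EuclideanSpace ℝ (Fin d) → ℝ≥0∞} {p β : ℝ} (hp : 0 < p)
    (c : EuclideanSpace ℝ (Fin d)) {r : ℝ} (hr : 0 < r) :
    ∫⁻ y in ball c r, g y ^ p ∂volume ≤
      volume (ball c r) * (morreyNormE d g p β ^ p * ENNReal.ofReal (r ^ (-β)) ^ p) := by
  have h := ENNReal.rpow_le_rpow (morrey_avg_le (g := g) (p := p) (β := β) c hr) hp.le
  rw [← ENNReal.rpow_mul, one_div_mul_cancel hp.ne', ENNReal.rpow_one,
    ENNReal.mul_rpow_of_nonneg _ _ hp.le] at h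
  calc _ = volume (ball c r) * ((volume (ball c r))⁻¹ * ∫⁻ y in ball c r, g y ^ p ∂volume) := by
        rw [← mul_assoc, ENNReal.mul_inv_cancel (vol_pos c hr) (vol_fin c r), one_mul]
    _ ≤ _ := by gcongr

lemma morrey_rpow_le {g : EuclideanSpace ℝ (Fin d) → ℝ≥0∞} {p β : ℝ} (hp : 0 < p) {K : ℝ≥0∞}
    (h : ∀ (c : EuclideanSpace ℝ (Fin d)) (r : ℝ), 0 < r → ∫⁻ y in ball c r, g y ^ p ∂volume ≤
      volume (ball c r) * (K * ENNReal.ofReal (r ^ (-β)) ^ p)) :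
    morreyNormE d g p β ^ p ≤ K := by
  rw [← ENNReal.le_rpow_inv_iff hp]
  refine iSup_le fun c => iSup_le fun r => iSup_le fun hr => ?_
  rw [ENNReal.le_rpow_inv_iff hp, ENNReal.mul_rpow_of_nonneg _ _ hp.le, ← ENNReal.rpow_mul,
    one_div_mul_cancel hp.ne', ENNReal.rpow_one]
  calc _ ≤ ENNReal.ofReal (r ^ β) ^ p * ((volume (ball c r))⁻¹ *
        (volume (ball c r) * (K * ENNReal.ofReal (r ^ (-β)) ^ p))) := by gcongr; exact h c r hr
    _ = (ENNReal.ofReal (r ^ β) * ENNReal.ofReal (r ^ (-β))) ^ p *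
        ((volume (ball c r))⁻¹ * volume (ball c r)) * K := by
        rw [ENNReal.mul_rpow_of_nonneg _ _ hp.le]; ring
    _ = K := by
        rw [rpow_cancel hr, ENNReal.inv_mul_cancel (vol_pos c hr) (vol_fin c r)]; simp

lemma osc_le_morrey (f : EuclideanSpace ℝ (Fin d) → ℝ) {p β : ℝ} (hp : 0 < p)
    (c : EuclideanSpace ℝ (Fin d)) {r : ℝ} (hr : 0 < r) :
    osc f c r ≤ morreyNormE d (sharpFn d f) p β * ENNReal.ofReal (r ^ (-β)) := by
  refine le_trans ?_ (morrey_avg_le (p := p) c hr)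
  rw [one_div, ENNReal.le_rpow_inv_iff hp]
  calc osc f c r ^ p
      = (volume (ball c r))⁻¹ * ∫⁻ y in ball c r, osc f c r ^ p ∂volume := by
        rw [setLIntegral_const, mul_comm (osc f c r ^ p), ← mul_assoc,
          ENNReal.inv_mul_cancel (vol_pos c hr) (vol_fin c r), one_mul]
    _ ≤ _ := by
        refine mul_le_mul_right ?_ _
        refine setLIntegral_mono' measurableSet_ball fun x hx => ?_
        exact ENNReal.rpow_le_rpow (osc_le_sharpFn f hr hx) hp.le

/-- Jensen's inequality: the average over a ball is at most the Morrey bound. -/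
lemma avg_le_morrey {f : EuclideanSpace ℝ (Fin d) → ℝ} (hf : LocallyIntegrable f volume)
    {p β : ℝ} (hp : 1 < p) (c : EuclideanSpace ℝ (Fin d)) {r : ℝ} (hr : 0 < r) :
    ENNReal.ofReal |⨍ z in ball c r, f z| ≤
      morreyNormE d (fun y => (‖f y‖₊ : ℝ≥0∞)) p β * ENNReal.ofReal (r ^ (-β)) := by
  refine le_trans ?_ (morrey_avg_le (p := p) c hr)
  have h0 := avg_sub_le hf c hr 0
  simp only [sub_zero] at h0
  refine h0.trans ?_
  have : IsProbabilityMeasure ((volume (ball c r))⁻¹ • volume.restrict (ball c r)) :=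
    ⟨by simp [ENNReal.inv_mul_cancel (vol_pos c hr) (vol_fin c r)]⟩
  have hm : AEStronglyMeasurable f ((volume (ball c r))⁻¹ • volume.restrict (ball c r)) :=
    (integrableOn_ball hf c r).aestronglyMeasurable.smul_measure _
  have h := eLpNorm'_le_eLpNorm'_of_exponent_le one_pos hp.le _ hm
  simpa [eLpNorm', lintegral_smul_measure, Real.enorm_eq_ofReal_abs, ← enorm_eq_nnnorm] using h

/-! ### Averages controlled by the sharp function -/

lemma avg_step {f : EuclideanSpace ℝ (Fin d) → ℝ} (hf : LocallyIntegrable f volume)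
    (c : EuclideanSpace ℝ (Fin d)) {r : ℝ} (hr : 0 < r) :
    ENNReal.ofReal |⨍ z in ball c r, f z| ≤
      ENNReal.ofReal |⨍ z in ball c (2 * r), f z| + 2 ^ d * osc f c (2 * r) := by
  set a := ⨍ z in ball c (2 * r), f z with ha
  have h := avg_sub_le hf c hr a
  have h2 : ∫⁻ y in ball c r, ENNReal.ofReal |f y - a| ≤ volume (ball c (2 * r)) * osc f c (2 * r) := by
    rw [← lintegral_eq_osc f c (by positivity)]
    exact lintegral_mono_set (ball_subset_ball (by linarith))
  have h3 : (volume (ball c r))⁻¹ * (volume (ball c (2 * r)) * osc f c (2 * r)) =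
      2 ^ d * osc f c (2 * r) := by
    rw [vol_scale c c two_pos]
    calc _ = ((volume (ball c r))⁻¹ * volume (ball c r)) * (ENNReal.ofReal 2 ^ d * osc f c (2 * r)) := by
          ring
      _ = _ := by rw [ENNReal.inv_mul_cancel (vol_pos c hr) (vol_fin c r)]; simp
  calc ENNReal.ofReal |⨍ z in ball c r, f z|
      ≤ ENNReal.ofReal (|a| + |(⨍ z in ball c r, f z) - a|) := by
        apply ENNReal.ofReal_le_ofReal
        have := abs_add_le a ((⨍ z in ball c r, f z) - a)
        simpa using this
    _ = ENNReal.ofReal |a| + ENNReal.ofReal |(⨍ z in ball c r, f z) - a| :=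
        ENNReal.ofReal_add (abs_nonneg _) (abs_nonneg _)
    _ ≤ _ := by
        gcongr
        rw [← h3]
        exact h.trans (by gcongr)

/-- Averages are controlled by the sharp function: telescope `f_{2^k B}` in `k`. The oscillation
terms form a geometric series of ratio `2^{-β}`, and `f_{2^k B} → 0` because the Morrey norm of
`f` is finite. -/
lemma avg_le_sharp {f : EuclideanSpace ℝ (Fin d) → ℝ} (hf : LocallyIntegrable f volume)
    {p β : ℝ} (hp : 1 < p) (hβ : 0 < β)
    (hG : morreyNormE d (fun y => (‖f y‖₊ : ℝ≥0∞)) p β < ⊤)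
    (c : EuclideanSpace ℝ (Fin d)) {r : ℝ} (hr : 0 < r) :
    ENNReal.ofReal |⨍ z in ball c r, f z| ≤
      ENNReal.ofReal (2 ^ d * (1 - (2 : ℝ) ^ (-β))⁻¹) *
        morreyNormE d (sharpFn d f) p β * ENNReal.ofReal (r ^ (-β)) := by
  set S := morreyNormE d (sharpFn d f) p β
  set G := morreyNormE d (fun y => (‖f y‖₊ : ℝ≥0∞)) p β
  set q : ℝ := (2 : ℝ) ^ (-β) with hq
  have hq0 : 0 < q := by positivity
  have hq1 : q < 1 := Real.rpow_lt_one_of_one_lt_of_neg one_lt_two (by linarith)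
  set D := ENNReal.ofReal (2 ^ d * (1 - q)⁻¹) with hD
  have hDq : 2 ^ d * ENNReal.ofReal q + D * ENNReal.ofReal q ≤ D := by
    have e : (2 : ℝ≥0∞) ^ d = ENNReal.ofReal (2 ^ d) := by
      rw [ENNReal.ofReal_pow (by norm_num)]; simp
    have h1q : 0 < 1 - q := by linarith
    rw [e, hD, ← ENNReal.ofReal_mul (by positivity), ← ENNReal.ofReal_mul (by positivity),
      ← ENNReal.ofReal_add (by positivity) (by positivity)]
    apply ENNReal.ofReal_le_ofReal
    have : q + (1 - q)⁻¹ * q ≤ (1 - q)⁻¹ := by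
      have : (1 - q)⁻¹ - (1 - q)⁻¹ * q = 1 := by field_simp
      linarith
    calc _ = (2 : ℝ) ^ d * (q + (1 - q)⁻¹ * q) := by ring
      _ ≤ _ := by gcongr
  have key : ∀ k : ℕ, ∀ r : ℝ, 0 < r → ENNReal.ofReal |⨍ z in ball c r, f z| ≤
      (D * S + ENNReal.ofReal q ^ k * G) * ENNReal.ofReal (r ^ (-β)) := by
    intro k
    induction k with
    | zero =>
      intro r hr
      refine (avg_le_morrey (β := β) hf hp c hr).trans ?_
      gcongr
      simp [G]
    | succ k ih =>
      intro r hr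
      have h2r : ENNReal.ofReal ((2 * r) ^ (-β)) = ENNReal.ofReal q * ENNReal.ofReal (r ^ (-β)) := by
        rw [Real.mul_rpow (by norm_num) hr.le, ENNReal.ofReal_mul hq0.le]
      have h1 := ih (2 * r) (by positivity)
      have h2 := osc_le_morrey f (p := p) (β := β) (by linarith) c (r := 2 * r) (by positivity)
      rw [h2r] at h1 h2
      calc _ ≤ _ := avg_step hf c hr
        _ ≤ (D * S + ENNReal.ofReal q ^ k * G) * (ENNReal.ofReal q * ENNReal.ofReal (r ^ (-β))) +
            2 ^ d * (S * (ENNReal.ofReal q * ENNReal.ofReal (r ^ (-β)))) := by gcongr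
        _ = ((2 ^ d * ENNReal.ofReal q + D * ENNReal.ofReal q) * S +
            ENNReal.ofReal q ^ (k + 1) * G) * ENNReal.ofReal (r ^ (-β)) := by ring
        _ ≤ _ := by gcongr
  have hlim : Tendsto (fun k : ℕ => (D * S + ENNReal.ofReal q ^ k * G) * ENNReal.ofReal (r ^ (-β)))
      atTop (𝓝 ((D * S + 0 * G) * ENNReal.ofReal (r ^ (-β)))) := by
    have h0 : Tendsto (fun k : ℕ => ENNReal.ofReal q ^ k) atTop (𝓝 0) :=
      ENNReal.tendsto_pow_atTop_nhds_zero_of_lt_one (by simpa using hq1)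
    refine ENNReal.Tendsto.mul_const ?_ (Or.inr ENNReal.ofReal_ne_top)
    exact tendsto_const_nhds.add (ENNReal.Tendsto.mul_const h0 (Or.inr hG.ne))
  simpa using ge_of_tendsto' hlim fun k => key k r hr

/-! ### The good-`λ` inequality -/

/-- Stopping time: at a Lebesgue point `x` with `|f x| > λ` there is a largest scale `8^{-k} r` at
which the average exceeds `λ`, while it is at most `λ` on the ball eight times larger. -/
lemma exists_radius {f : EuclideanSpace ℝ (Fin d) → ℝ} {x : EuclideanSpace ℝ (Fin d)}
    {r l : ℝ} (hr : 0 < r) (hx : l < |f x|)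
    (hlim : Tendsto (fun k : ℕ => ⨍ z in ball x ((1 / 8) ^ k * r), f z) atTop (𝓝 (f x)))
    (h0 : |⨍ z in ball x r, f z| ≤ l) :
    ∃ ρ : ℝ, 0 < ρ ∧ ρ ≤ r / 8 ∧ l < |⨍ z in ball x ρ, f z| ∧ |⨍ z in ball x (8 * ρ), f z| ≤ l := by
  classical
  have hex : ∃ k : ℕ, l < |⨍ z in ball x ((1 / 8) ^ k * r), f z| :=
    (hlim.abs.eventually_const_lt hx).exists
  have hk := Nat.find_spec hex
  have hmin : ∀ m < Nat.find hex, ¬ _ := fun m hm => Nat.find_min hex hm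
  generalize Nat.find hex = k at hk hmin
  cases k with
  | zero => simp only [pow_zero, one_mul] at hk; linarith
  | succ k =>
    refine ⟨(1 / 8) ^ (k + 1) * r, by positivity, ?_, hk, ?_⟩
    · have : ((1 : ℝ) / 8) ^ k ≤ 1 := pow_le_one₀ (by norm_num) (by norm_num)
      rw [pow_succ]; nlinarith
    · have := hmin k (Nat.lt_succ_self k)
      rw [not_lt] at this
      have e : 8 * (((1 : ℝ) / 8) ^ (k + 1) * r) = (1 / 8) ^ k * r := by ring
      rwa [e]

lemma ae_tendsto_avg {f : EuclideanSpace ℝ (Fin d) → ℝ} (hf : LocallyIntegrable f volume)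
    {r : ℝ} (hr : 0 < r) :
    ∀ᵐ x, Tendsto (fun k : ℕ => ⨍ z in ball x ((1 / 8) ^ k * r), f z) atTop (𝓝 (f x)) := by
  filter_upwards [IsUnifLocDoublingMeasure.ae_tendsto_average volume hf 1] with x hx
  have hδ : Tendsto (fun k : ℕ => ((1 : ℝ) / 8) ^ k * r) atTop (𝓝[>] 0) := by
    refine tendsto_nhdsWithin_iff.2 ⟨?_, Eventually.of_forall fun k => ?_⟩
    · simpa using (_root_.tendsto_pow_atTop_nhds_zero_of_lt_one (r := (1 : ℝ) / 8)
        (by norm_num) (by norm_num)).mul_const r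
    · simp only [Set.mem_Ioi]; positivity
  have := hx (fun _ => x) _ hδ (Eventually.of_forall fun k => by
    simp only [one_mul]; exact mem_closedBall_self (by positivity))
  refine this.congr fun k => ?_
  refine setAverage_congr ?_
  have hk : ((1 : ℝ) / 8) ^ k * r ≠ 0 := by positivity
  have hS := Measure.addHaar_sphere_of_ne_zero volume x hk
  rw [← ball_union_sphere]
  simpa using (ae_eq_refl (ball x (((1 : ℝ) / 8) ^ k * r))).union (ae_eq_empty.2 hS)

/-- The estimate on a single stopping ball `B`. If `f^♯ > γλ` throughout `B` the second term
alone suffices; otherwise the oscillation on `B` and `8B` is at most `γλ`, and Chebyshev shows both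
that `{|f| > 2λ}` is a small part of `8B` and that `{|f| > λ/2}` fills at least half of `B`. -/
lemma single_ball {f : EuclideanSpace ℝ (Fin d) → ℝ} (hf : LocallyIntegrable f volume)
    {x : EuclideanSpace ℝ (Fin d)} {ρ l γ : ℝ} (hρ : 0 < ρ) (hl : 0 < l) (hγ : 0 < γ)
    (hγ4 : γ ≤ 1 / 4)
    (h1 : l < |⨍ z in ball x ρ, f z|) (h8 : |⨍ z in ball x (8 * ρ), f z| ≤ l) :
    volume ({y | 2 * l < |f y|} ∩ ball x (8 * ρ)) ≤
      8 ^ d * (ENNReal.ofReal (2 * γ) * volume (ball x ρ ∩ {y | l / 2 < |f y|}) +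
        volume (ball x ρ ∩ {y | ENNReal.ofReal (γ * l) < sharpFn d f y})) := by
  have hV8 : volume (ball x (8 * ρ)) = 8 ^ d * volume (ball x ρ) := by
    rw [vol_scale x x (by norm_num : (0 : ℝ) < 8)]; norm_num
  have hl0 : ENNReal.ofReal l ≠ 0 := by simpa using hl
  by_cases hbad : ∀ y ∈ ball x ρ, ENNReal.ofReal (γ * l) < sharpFn d f y
  · have : ball x ρ ∩ {y | ENNReal.ofReal (γ * l) < sharpFn d f y} = ball x ρ :=
      Set.inter_eq_left.2 hbad
    rw [this]
    calc _ ≤ volume (ball x (8 * ρ)) := measure_mono Set.inter_subset_right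
      _ = 8 ^ d * (0 + volume (ball x ρ)) := by rw [hV8, zero_add]
      _ ≤ _ := by gcongr; exact zero_le
  · push Not at hbad
    obtain ⟨z, hz, hzs⟩ := hbad
    have ho1 : osc f x ρ ≤ ENNReal.ofReal (γ * l) := (osc_le_sharpFn f hρ hz).trans hzs
    have ho8 : osc f x (8 * ρ) ≤ ENNReal.ofReal (γ * l) :=
      (osc_le_sharpFn f (by positivity) (ball_subset_ball (by linarith) hz)).trans hzs
    have c8 := cheb hf x (r := 8 * ρ) (by positivity) (t := l)
      (s := {y | 2 * l < |f y|} ∩ ball x (8 * ρ)) Set.inter_subset_right (by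
        rintro y ⟨hy, -⟩
        have hy : 2 * l < |f y| := hy
        have := abs_sub_abs_le_abs_sub (f y) (⨍ z in ball x (8 * ρ), f z)
        linarith)
    have c1 := cheb hf x hρ (t := l / 2) (s := ball x ρ \ {y | l / 2 < |f y|})
      Set.sdiff_subset (by
        rintro y ⟨-, hy⟩
        have hy : |f y| ≤ l / 2 := not_lt.1 hy
        have := abs_sub_abs_le_abs_sub (⨍ z in ball x ρ, f z) (f y)
        rw [abs_sub_comm] at this
        linarith)
    have b8 : volume ({y | 2 * l < |f y|} ∩ ball x (8 * ρ)) ≤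
        8 ^ d * (ENNReal.ofReal γ * volume (ball x ρ)) := by
      rw [← ENNReal.mul_le_mul_iff_right hl0 ENNReal.ofReal_ne_top]
      refine c8.trans ((mul_le_mul_right ho8 _).trans_eq ?_)
      rw [hV8, ENNReal.ofReal_mul hγ.le]; ring
    have b1 : volume (ball x ρ \ {y | l / 2 < |f y|}) ≤ ENNReal.ofReal (1 / 2) * volume (ball x ρ) := by
      have hl2 : ENNReal.ofReal (l / 2) ≠ 0 := by simpa using hl
      rw [← ENNReal.mul_le_mul_iff_right hl2 ENNReal.ofReal_ne_top]
      refine c1.trans ?_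
      rw [← mul_assoc, ← ENNReal.ofReal_mul (by positivity), mul_comm]
      gcongr
      refine ho1.trans (ENNReal.ofReal_le_ofReal ?_)
      nlinarith
    have bB : volume (ball x ρ) ≤ 2 * volume (ball x ρ ∩ {y | l / 2 < |f y|}) := by
      have hfin := vol_fin x ρ
      have hle := measure_le_inter_add_sdiff volume (ball x ρ) {y | l / 2 < |f y|}
      have h3 := hle.trans (add_le_add_right b1 _)
      have hA : volume (ball x ρ ∩ {y | l / 2 < |f y|}) ≠ ⊤ :=
        measure_ne_top_of_subset Set.inter_subset_left hfin
      lift volume (ball x ρ) to NNReal using hfin with V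
      lift volume (ball x ρ ∩ {y | l / 2 < |f y|}) to NNReal using hA with A
      have e : ENNReal.ofReal (1 / 2) = ((1 / 2 : NNReal) : ℝ≥0∞) := by
        rw [ENNReal.ofReal]; congr; ext; norm_num
      rw [e] at h3
      norm_cast at h3 ⊢
      have h3' : (V : ℝ) ≤ A + 1 / 2 * V := by exact_mod_cast h3
      have : (V : ℝ) ≤ 2 * A := by linarith
      exact_mod_cast this
    calc _ ≤ _ := b8
      _ ≤ 8 ^ d * (ENNReal.ofReal γ * (2 * volume (ball x ρ ∩ {y | l / 2 < |f y|}))) := by gcongr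
      _ = 8 ^ d * (ENNReal.ofReal (2 * γ) * volume (ball x ρ ∩ {y | l / 2 < |f y|}) + 0) := by
        rw [ENNReal.ofReal_mul (by norm_num)]
        simp only [ENNReal.ofReal_ofNat, add_zero]; ring
      _ ≤ _ := by gcongr; exact zero_le

/-- The good-`λ` inequality, localised to a ball: sum `single_ball` over a disjoint Vitali
subfamily of the stopping balls. -/
lemma good_lambda {f : EuclideanSpace ℝ (Fin d) → ℝ} (hf : LocallyIntegrable f volume)
    (c : EuclideanSpace ℝ (Fin d)) {r l γ : ℝ} (hr : 0 < r) (hl : 0 < l) (hγ : 0 < γ)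
    (hγ4 : γ ≤ 1 / 4) (h0 : ∀ x, |⨍ z in ball x r, f z| ≤ l) :
    volume (ball c r ∩ {y | 2 * l < |f y|}) ≤
      8 ^ d * (ENNReal.ofReal (2 * γ) * volume (ball c (2 * r) ∩ {y | l / 2 < |f y|}) +
        volume (ball c (2 * r) ∩ {y | ENNReal.ofReal (γ * l) < sharpFn d f y})) := by
  set T : Set (EuclideanSpace ℝ (Fin d)) :=
    {x | Tendsto (fun k : ℕ => ⨍ z in ball x ((1 / 8) ^ k * r), f z) atTop (𝓝 (f x))} with hT
  set t := (ball c r ∩ {y | 2 * l < |f y|}) ∩ T with ht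
  have hex : ∀ x ∈ t, ∃ ρ : ℝ, 0 < ρ ∧ ρ ≤ r / 8 ∧ l < |⨍ z in ball x ρ, f z| ∧
      |⨍ z in ball x (8 * ρ), f z| ≤ l := by
    rintro x ⟨⟨-, hx⟩, hxT⟩
    have hx : 2 * l < |f x| := hx
    exact exists_radius hr (by linarith) hxT (h0 x)
  choose! ρ hρ0 hρr hρ1 hρ8 using hex
  obtain ⟨u, hut, hdisj, hcov⟩ :=
    Vitali.exists_disjoint_subfamily_covering_enlargement_closedBall t (fun x => x) ρ (r / 8)
      hρr 5 (by norm_num)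
  have hdisj' : u.PairwiseDisjoint fun a => ball a (ρ a) :=
    hdisj.mono fun a => ball_subset_closedBall
  have hcount : u.Countable := hdisj'.countable_of_isOpen (fun _ _ => isOpen_ball)
    fun a ha => nonempty_ball.2 (hρ0 a (hut ha))
  have hsub : ball c r ∩ {y | 2 * l < |f y|} ⊆
      Tᶜ ∪ ⋃ a ∈ u, ({y | 2 * l < |f y|} ∩ ball a (8 * ρ a)) := by
    intro x hx
    by_cases hxT : x ∈ T
    · right
      obtain ⟨b, hb, hsb⟩ := hcov x ⟨hx, hxT⟩
      have hρb := hρ0 b (hut hb)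
      refine Set.mem_biUnion hb ⟨hx.2, ?_⟩
      have := hsb (mem_closedBall_self (hρ0 x ⟨hx, hxT⟩).le)
      exact closedBall_subset_ball (by linarith) this
    · exact Or.inl hxT
  have hTc : volume Tᶜ = 0 := ae_iff.1 (ae_tendsto_avg hf hr)
  have hball : (⋃ a ∈ u, ball a (ρ a)) ⊆ ball c (2 * r) := by
    refine Set.iUnion₂_subset fun a ha => ball_subset_ball' ?_
    have h1 : dist a c < r := (hut ha).1.1
    have h2 := hρr a (hut ha)
    linarith
  have hsum : ∀ F : Set (EuclideanSpace ℝ (Fin d)),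
      ∑' a : u, volume (ball (a : EuclideanSpace ℝ (Fin d)) (ρ a) ∩ F) ≤
        volume (ball c (2 * r) ∩ F) := by
    intro F
    calc _ = ∑' a : u, (volume.restrict F) (ball (a : EuclideanSpace ℝ (Fin d)) (ρ a)) := by
          congr 1; ext a; rw [Measure.restrict_apply measurableSet_ball]
      _ = (volume.restrict F) (⋃ a ∈ u, ball a (ρ a)) :=
          (measure_biUnion hcount hdisj' fun _ _ => measurableSet_ball).symm
      _ ≤ (volume.restrict F) (ball c (2 * r)) := measure_mono hball
      _ = _ := Measure.restrict_apply measurableSet_ball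
  calc volume (ball c r ∩ {y | 2 * l < |f y|})
      ≤ volume (Tᶜ ∪ ⋃ a ∈ u, ({y | 2 * l < |f y|} ∩ ball a (8 * ρ a))) := measure_mono hsub
    _ ≤ volume Tᶜ + volume (⋃ a ∈ u, ({y | 2 * l < |f y|} ∩ ball a (8 * ρ a))) :=
        measure_union_le _ _
    _ ≤ 0 + ∑' a : u, volume ({y | 2 * l < |f y|} ∩
          ball (a : EuclideanSpace ℝ (Fin d)) (8 * ρ a)) := by
        rw [hTc]; gcongr; exact measure_biUnion_le volume hcount _
    _ ≤ ∑' a : u, 8 ^ d * (ENNReal.ofReal (2 * γ) *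
          volume (ball (a : EuclideanSpace ℝ (Fin d)) (ρ a) ∩ {y | l / 2 < |f y|}) +
        volume (ball (a : EuclideanSpace ℝ (Fin d)) (ρ a) ∩
          {y | ENNReal.ofReal (γ * l) < sharpFn d f y})) := by
        rw [zero_add]
        exact ENNReal.tsum_le_tsum fun a => single_ball hf (hρ0 a (hut a.2)) hl hγ hγ4
          (hρ1 a (hut a.2)) (hρ8 a (hut a.2))
    _ ≤ _ := by
        rw [ENNReal.tsum_mul_left, ENNReal.tsum_add, ENNReal.tsum_mul_left]
        gcongr
        · exact hsum _
        · exact hsum _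

/-! ### Integration over levels -/

/-- Layer cake formula for an a.e. finite `ℝ≥0∞`-valued function. -/
lemma layer {g : EuclideanSpace ℝ (Fin d) → ℝ≥0∞} {p : ℝ} (hp : 0 < p)
    {s : Set (EuclideanSpace ℝ (Fin d))} (hs : MeasurableSet s)
    (hg : AEMeasurable g (volume.restrict s))
    (hfin : ∀ᵐ x ∂volume.restrict s, g x ≠ ⊤) :
    ∫⁻ x in s, g x ^ p = ENNReal.ofReal p * ∫⁻ t in Set.Ioi (0 : ℝ),
      volume (s ∩ {x | ENNReal.ofReal t < g x}) * ENNReal.ofReal (t ^ (p - 1)) := by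
  have h := lintegral_rpow_eq_lintegral_meas_lt_mul (volume.restrict s)
    (f := fun x => (g x).toReal) (Eventually.of_forall fun x => ENNReal.toReal_nonneg)
    hg.ennreal_toReal hp
  calc _ = ∫⁻ x in s, ENNReal.ofReal ((g x).toReal ^ p) := by
        refine lintegral_congr_ae ?_
        filter_upwards [hfin] with x hx
        rw [← ENNReal.ofReal_rpow_of_nonneg ENNReal.toReal_nonneg hp.le, ENNReal.ofReal_toReal hx]
    _ = _ := h
    _ = _ := by
        congr 1
        refine setLIntegral_congr_fun measurableSet_Ioi fun t ht => ?_
        have ht : 0 < t := ht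
        congr 1
        rw [Set.inter_comm, ← Measure.restrict_apply' hs]
        refine measure_congr ?_
        filter_upwards [hfin] with x hx
        exact propext (ENNReal.ofReal_lt_iff_lt_toReal ht.le hx).symm

lemma antitone_meas (s : Set (EuclideanSpace ℝ (Fin d))) (g : EuclideanSpace ℝ (Fin d) → ℝ≥0∞) :
    Antitone fun t : ℝ => volume (s ∩ {x | ENNReal.ofReal t < g x}) := fun _ _ hab =>
  measure_mono fun _ hx => ⟨hx.1, (ENNReal.ofReal_le_ofReal hab).trans_lt hx.2⟩

/-- The good-`λ` inequality integrated against `p t^{p-1} dt`. Levels below `2 l₀`, where the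
stopping argument is not available, contribute the first term. -/
lemma local_estimate {f : EuclideanSpace ℝ (Fin d) → ℝ} (hf : LocallyIntegrable f volume)
    {p : ℝ} (hp : 0 < p) (c : EuclideanSpace ℝ (Fin d)) {r l₀ γ : ℝ} (hr : 0 < r)
    (hγ : 0 < γ) (hγ4 : γ ≤ 1 / 4) (h0 : ∀ x, |⨍ z in ball x r, f z| ≤ l₀)
    (hS : ∫⁻ x in ball c (2 * r), sharpFn d f x ^ p ≠ ⊤) :
    ∫⁻ x in ball c r, ENNReal.ofReal |f x| ^ p ≤
      volume (ball c r) * ENNReal.ofReal (2 * l₀) ^ p +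
      8 ^ d * (ENNReal.ofReal (2 * γ) *
          (4 ^ p * ∫⁻ x in ball c (2 * r), ENNReal.ofReal |f x| ^ p) +
        ENNReal.ofReal (2 / γ) ^ p * ∫⁻ x in ball c (2 * r), sharpFn d f x ^ p) := by
  have hfm : ∀ s, AEMeasurable (fun x => ENNReal.ofReal |f x|) (volume.restrict s) := fun s =>
    (hf.aestronglyMeasurable.aemeasurable.norm.ennreal_ofReal).restrict
  have hsm := measurable_sharpFn f
  have L1 := layer hp (measurableSet_ball (x := c) (ε := r)) (hfm _) (by simp)
  have L2 := layer (g := fun _ => ENNReal.ofReal (2 * l₀)) hp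
    (measurableSet_ball (x := c) (ε := r)) aemeasurable_const
    (Eventually.of_forall fun _ => ENNReal.ofReal_ne_top)
  have L3 := layer (g := fun x => 4 * ENNReal.ofReal |f x|) hp
    (measurableSet_ball (x := c) (ε := 2 * r)) ((hfm _).const_mul 4)
    (Eventually.of_forall fun x => ENNReal.mul_ne_top (by simp) (by simp))
  have L4 := layer (g := fun x => ENNReal.ofReal (2 / γ) * sharpFn d f x) hp
    (measurableSet_ball (x := c) (ε := 2 * r)) (hsm.const_mul _).aemeasurable (by
      filter_upwards [ae_lt_top (hsm.pow_const p) hS] with x hx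
      refine ENNReal.mul_ne_top (by simp) fun h => ?_
      rw [h, ENNReal.top_rpow_of_pos hp] at hx
      exact lt_irrefl _ hx)
  have E3 : ∫⁻ x in ball c (2 * r), (4 * ENNReal.ofReal |f x|) ^ p =
      4 ^ p * ∫⁻ x in ball c (2 * r), ENNReal.ofReal |f x| ^ p := by
    simp only [ENNReal.mul_rpow_of_nonneg _ _ hp.le]
    exact lintegral_const_mul' _ _ (by simp)
  have E4 : ∫⁻ x in ball c (2 * r), (ENNReal.ofReal (2 / γ) * sharpFn d f x) ^ p =
      ENNReal.ofReal (2 / γ) ^ p * ∫⁻ x in ball c (2 * r), sharpFn d f x ^ p := by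
    simp only [ENNReal.mul_rpow_of_nonneg _ _ hp.le]
    exact lintegral_const_mul' _ _ (by simp [hp.le])
  have E2 : ∫⁻ x in ball c r, ENNReal.ofReal (2 * l₀) ^ p =
      volume (ball c r) * ENNReal.ofReal (2 * l₀) ^ p := by
    rw [setLIntegral_const, mul_comm]
  rw [← E2, ← E3, ← E4, L1, L2, L3, L4]
  set m1 := fun t : ℝ => volume (ball c r ∩ {x | ENNReal.ofReal t < ENNReal.ofReal |f x|})
  set m2 := fun t : ℝ => volume (ball c r ∩
    {x : EuclideanSpace ℝ (Fin d) | ENNReal.ofReal t < ENNReal.ofReal (2 * l₀)}) with hm2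
  set m3 := fun t : ℝ => volume (ball c (2 * r) ∩ {x | ENNReal.ofReal t < 4 * ENNReal.ofReal |f x|})
    with hm3
  set m4 := fun t : ℝ => volume (ball c (2 * r) ∩
    {x | ENNReal.ofReal t < ENNReal.ofReal (2 / γ) * sharpFn d f x}) with hm4
  have M2 : Measurable m2 := (antitone_meas _ _).measurable
  have M3 : Measurable m3 := (antitone_meas _ _).measurable
  have M4 : Measurable m4 := (antitone_meas _ _).measurable
  set w := fun t : ℝ => ENNReal.ofReal (t ^ (p - 1))
  have W : Measurable w := (measurable_id.pow_const (p - 1)).ennreal_ofReal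
  have key : ∀ t : ℝ, 0 < t → m1 t ≤ m2 t + 8 ^ d * (ENNReal.ofReal (2 * γ) * m3 t + m4 t) := by
    intro t ht
    by_cases htl : t < 2 * l₀
    · have h2 : m2 t = volume (ball c r) := by
        have : ENNReal.ofReal t < ENNReal.ofReal (2 * l₀) :=
          (ENNReal.ofReal_lt_ofReal_iff (ht.trans htl)).2 htl
        simp only [hm2, this, Set.ofPred_true, Set.inter_univ]
      rw [h2]
      exact (measure_mono Set.inter_subset_left).trans le_self_add
    · have hg := good_lambda hf c (l := t / 2) hr (by positivity) hγ hγ4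
        (fun x => (h0 x).trans (by linarith))
      refine le_add_left (le_trans (measure_mono ?_) (hg.trans ?_))
      · rintro x ⟨hx, hx2⟩
        refine ⟨hx, ?_⟩
        have := (ENNReal.ofReal_lt_ofReal_iff_of_nonneg ht.le).1 hx2
        change 2 * (t / 2) < |f x|
        linarith
      · gcongr
        · refine measure_mono fun x hx => ⟨hx.1, ?_⟩
          have hx2 : t / 2 / 2 < |f x| := hx.2
          change ENNReal.ofReal t < 4 * ENNReal.ofReal |f x|
          have e4 : (4 : ℝ≥0∞) = ENNReal.ofReal 4 := by simp
          rw [e4, ← ENNReal.ofReal_mul (by norm_num), ENNReal.ofReal_lt_ofReal_iff_of_nonneg ht.le]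
          linarith
        · refine measure_mono fun x hx => ⟨hx.1, ?_⟩
          have hx2 : ENNReal.ofReal (γ * (t / 2)) < sharpFn d f x := hx.2
          change ENNReal.ofReal t < ENNReal.ofReal (2 / γ) * sharpFn d f x
          have hc0 : ENNReal.ofReal (2 / γ) ≠ 0 := by simpa using hγ
          have e : ENNReal.ofReal t = ENNReal.ofReal (2 / γ) * ENNReal.ofReal (γ * (t / 2)) := by
            rw [← ENNReal.ofReal_mul (by positivity)]; congr 1; field_simp
          rw [e]
          exact ENNReal.mul_lt_mul_right hc0 (by simp) hx2
  have hint : ∫⁻ t in Set.Ioi (0 : ℝ), m1 t * w t ≤ (∫⁻ t in Set.Ioi (0 : ℝ), m2 t * w t) +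
      8 ^ d * (ENNReal.ofReal (2 * γ) * (∫⁻ t in Set.Ioi (0 : ℝ), m3 t * w t) +
        ∫⁻ t in Set.Ioi (0 : ℝ), m4 t * w t) := by
    calc _ ≤ ∫⁻ t in Set.Ioi (0 : ℝ), (m2 t * w t +
          8 ^ d * (ENNReal.ofReal (2 * γ) * (m3 t * w t) + m4 t * w t)) := by
          refine setLIntegral_mono' measurableSet_Ioi fun t ht => ?_
          calc _ ≤ (m2 t + 8 ^ d * (ENNReal.ofReal (2 * γ) * m3 t + m4 t)) * w t := by
                gcongr; exact key t ht
            _ = _ := by ring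
      _ = _ := by
          rw [lintegral_add_left (f := fun t => m2 t * w t) (M2.mul W), lintegral_const_mul' _ _ (by simp),
            lintegral_add_right (g := fun t => m4 t * w t) _ (M4.mul W), lintegral_const_mul' _ _ ENNReal.ofReal_ne_top]
  exact (mul_le_mul_right hint _).trans_eq (by ring)

/-! ### Absorption in the Morrey norm -/

/-- Absorption of the small multiple of the (finite) left-hand side. -/
lemma absorb {x y : ℝ≥0∞} (hx : x ≠ ⊤) (h : x ≤ y + ENNReal.ofReal (1 / 2) * x) : x ≤ 2 * y := by
  by_cases hy : y = ⊤
  · simp [hy]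
  lift x to NNReal using hx
  lift y to NNReal using hy
  have e : ENNReal.ofReal (1 / 2) = ((1 / 2 : NNReal) : ℝ≥0∞) := by
    rw [ENNReal.ofReal]; congr; ext; norm_num
  rw [e] at h
  norm_cast at h ⊢
  have h3' : (x : ℝ) ≤ y + 1 / 2 * x := by exact_mod_cast h
  have : (x : ℝ) ≤ 2 * y := by linarith
  exact_mod_cast this

end MorreyFS

open MorreyFS in
/-- **Fefferman–Stein theorem in homogeneous Morrey spaces.** For `p ∈ (1,∞)` and
`0 < β ≤ d/p` there is `N = N(d,p,β)` such that for every locally integrable `f` with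
`‖f‖_{Ė_{p,β}} < ∞`:  `‖f‖_{Ė_{p,β}} ≤ N ‖f^{♯}‖_{Ė_{p,β}}`. -/
theorem fefferman_stein_morrey (d : ℕ) (hd : 1 ≤ d) (p β : ℝ) (hp : 1 < p)
    (hβ0 : 0 < β) (hβd : β ≤ d / p) :
    ∃ N : ℝ, 0 < N ∧
      ∀ f : EuclideanSpace ℝ (Fin d) → ℝ, LocallyIntegrable f volume →
        morreyNormE d (fun y => (‖f y‖₊ : ℝ≥0∞)) p β < ⊤ →
        morreyNormE d (fun y => (‖f y‖₊ : ℝ≥0∞)) p β ≤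
          ENNReal.ofReal N * morreyNormE d (sharpFn d f) p β := by
  have hp0 : 0 < p := by linarith
  set C₀ : ℝ := 2 ^ d * (1 - (2 : ℝ) ^ (-β))⁻¹ with hC₀
  -- This `γ` makes the coefficient `16 ^ d * (2 * γ * 4 ^ p)` of `‖f‖ ^ p` equal to `1 / 2`.
  set γ : ℝ := (4 * 16 ^ d * 4 ^ p)⁻¹ with hγdef
  have h16 : (1 : ℝ) ≤ 16 ^ d := one_le_pow₀ (by norm_num)
  have h4p : (1 : ℝ) ≤ 4 ^ p := Real.one_le_rpow (by norm_num) hp0.le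
  have hγ : 0 < γ := by positivity
  have hγ4 : γ ≤ 1 / 4 := by
    rw [hγdef, one_div]
    apply inv_anti₀ (by norm_num)
    nlinarith [mul_le_mul h16 h4p zero_le_one (by positivity)]
  set K : ℝ≥0∞ := ENNReal.ofReal (2 * C₀) ^ p + 16 ^ d * ENNReal.ofReal (2 / γ) ^ p with hK
  have hKtop : K ≠ ⊤ := by
    refine ENNReal.add_ne_top.2 ⟨ENNReal.rpow_ne_top_of_nonneg hp0.le ENNReal.ofReal_ne_top,
      ENNReal.mul_ne_top (by simp) (by simp [hp0.le])⟩
  have hNtop : (2 * K) ^ (1 / p) ≠ ⊤ :=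
    ENNReal.rpow_ne_top_of_nonneg (by positivity) (ENNReal.mul_ne_top (by simp) hKtop)
  refine ⟨((2 * K) ^ (1 / p)).toReal + 1, by positivity, fun f hf hG => ?_⟩
  have hNle : (2 * K) ^ (1 / p) ≤ ENNReal.ofReal (((2 * K) ^ (1 / p)).toReal + 1) := by
    rw [← ENNReal.ofReal_toReal hNtop]
    exact ENNReal.ofReal_le_ofReal (by simp)
  by_cases hS : morreyNormE d (sharpFn d f) p β = ⊤
  · rw [hS, ENNReal.mul_top]
    · exact le_top
    · rw [Ne, ENNReal.ofReal_eq_zero, not_le]; positivity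
  set S := morreyNormE d (sharpFn d f) p β with hSdef
  have hfe : (fun y => (‖f y‖₊ : ℝ≥0∞)) = fun y => ENNReal.ofReal |f y| := by
    funext y; rw [← Real.enorm_eq_ofReal_abs, enorm_eq_nnnorm]
  have hT := fun (x : EuclideanSpace ℝ (Fin d)) (r : ℝ) (hr : 0 < r) =>
    avg_le_sharp hf hp hβ0 hG x hr
  rw [hfe] at hG ⊢
  set G := morreyNormE d (fun y => ENNReal.ofReal |f y|) p β with hGdef
  have hε : (16 : ℝ≥0∞) ^ d * (ENNReal.ofReal (2 * γ) * 4 ^ p) = ENNReal.ofReal (1 / 2) := by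
    have e16 : (16 : ℝ≥0∞) ^ d = ENNReal.ofReal (16 ^ d) := by
      rw [ENNReal.ofReal_pow (by norm_num)]; simp
    have e4 : (4 : ℝ≥0∞) ^ p = ENNReal.ofReal (4 ^ p) := by
      rw [← ENNReal.ofReal_rpow_of_pos (by norm_num)]; simp
    rw [e16, e4, ← ENNReal.ofReal_mul (by positivity), ← ENNReal.ofReal_mul (by positivity)]
    congr 1
    rw [hγdef]; field_simp; norm_num
  have main : G ^ p ≤ K * S ^ p + ENNReal.ofReal (1 / 2) * G ^ p := by
    refine morrey_rpow_le hp0 fun c r hr => ?_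
    set R := ENNReal.ofReal (r ^ (-β)) with hR
    have hRR : ENNReal.ofReal ((2 * r) ^ (-β)) ≤ R := by
      apply ENNReal.ofReal_le_ofReal
      exact Real.rpow_le_rpow_of_nonpos hr (by linarith) (by linarith)
    have hV : volume (ball c (2 * r)) = 2 ^ d * volume (ball c r) := by
      rw [vol_scale c c two_pos]; simp
    have hTop : ENNReal.ofReal C₀ * S * R ≠ ⊤ :=
      ENNReal.mul_ne_top (ENNReal.mul_ne_top (by simp) hS) (by simp [hR])
    have hSint : ∫⁻ x in ball c (2 * r), sharpFn d f x ^ p ≤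
        2 ^ d * volume (ball c r) * (S ^ p * R ^ p) := by
      rw [← hV]
      refine (morrey_lintegral_le (β := β) hp0 c (by positivity)).trans ?_
      gcongr
    have hGint : ∫⁻ x in ball c (2 * r), ENNReal.ofReal |f x| ^ p ≤
        2 ^ d * volume (ball c r) * (G ^ p * R ^ p) := by
      rw [← hV]
      refine (morrey_lintegral_le (β := β) hp0 c (by positivity)).trans ?_
      gcongr
    have hSfin : ∫⁻ x in ball c (2 * r), sharpFn d f x ^ p ≠ ⊤ := by
      refine ne_top_of_le_ne_top ?_ hSint
      refine ENNReal.mul_ne_top (ENNReal.mul_ne_top (by simp) (vol_fin c r)) ?_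
      exact ENNReal.mul_ne_top (ENNReal.rpow_ne_top_of_nonneg hp0.le hS)
        (ENNReal.rpow_ne_top_of_nonneg hp0.le (by simp [hR]))
    have hl := local_estimate hf hp0 c (l₀ := (ENNReal.ofReal C₀ * S * R).toReal) hr hγ hγ4
      (fun x => (ENNReal.ofReal_le_iff_le_toReal hTop).1 (hT x r hr)) hSfin
    have hl0 : ENNReal.ofReal (2 * (ENNReal.ofReal C₀ * S * R).toReal) =
        ENNReal.ofReal (2 * C₀) * S * R := by
      rw [ENNReal.ofReal_mul zero_le_two, ENNReal.ofReal_toReal hTop,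
        ENNReal.ofReal_mul (q := C₀) zero_le_two]
      ring
    rw [hl0, ENNReal.mul_rpow_of_nonneg _ _ hp0.le, ENNReal.mul_rpow_of_nonneg _ _ hp0.le] at hl
    have e : (8 : ℝ≥0∞) ^ d * 2 ^ d = 16 ^ d := by rw [← mul_pow]; norm_num
    calc _ ≤ _ := hl
      _ ≤ volume (ball c r) * (ENNReal.ofReal (2 * C₀) ^ p * S ^ p * R ^ p) +
          8 ^ d * (ENNReal.ofReal (2 * γ) * (4 ^ p * (2 ^ d * volume (ball c r) * (G ^ p * R ^ p))) +
          ENNReal.ofReal (2 / γ) ^ p * (2 ^ d * volume (ball c r) * (S ^ p * R ^ p))) := by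
          gcongr
      _ = volume (ball c r) * (((ENNReal.ofReal (2 * C₀) ^ p +
            (8 ^ d * 2 ^ d) * ENNReal.ofReal (2 / γ) ^ p) * S ^ p +
          ((8 ^ d * 2 ^ d) * (ENNReal.ofReal (2 * γ) * 4 ^ p)) * G ^ p) * R ^ p) := by ring
      _ = _ := by rw [e, hε]
  have habs := absorb (ENNReal.rpow_ne_top_of_nonneg hp0.le hG.ne) main
  calc G = (G ^ p) ^ (1 / p) := by
        rw [← ENNReal.rpow_mul, mul_one_div_cancel hp0.ne', ENNReal.rpow_one]
    _ ≤ (2 * K * S ^ p) ^ (1 / p) := by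
        refine ENNReal.rpow_le_rpow ?_ (by positivity)
        rwa [mul_assoc]
    _ = (2 * K) ^ (1 / p) * S := by
        rw [ENNReal.mul_rpow_of_nonneg _ _ (by positivity), ← ENNReal.rpow_mul,
          mul_one_div_cancel hp0.ne', ENNReal.rpow_one]
    _ ≤ _ := by gcongr
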